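/- There exist constants C > 0 and w₀ ∈ (0,1) such that for every w with 0 < w < w₀ and every real Y ≥ 1, |∑_{n ≤ Y} (r₂(n)²/n²)·sin²(π·√n·w) − 8·π²·w²·(log w)²| ≤ C·(w²·|log w| + Y^{−1}·log 2Y). -/

import Mathlib

open MeasureTheory Filter Real

noncomputable section

/-- The Cygan–Korányi norm on `ℝ³`. -/
def cyganNorm (u : ℝ × ℝ × ℝ) : ℝ :=
  ((u.1 ^ 2 + u.2.1 ^ 2) ^ 2 + u.2.2 ^ 2) ^ ((1 : ℝ) / 4)

/-- The unit ball for the Cygan–Korányi norm. -/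
def cyganBall : Set (ℝ × ℝ × ℝ) := {u | cyganNorm u ≤ 1}

/-- The Heisenberg dilation `δ_x`. -/
def heisDil (x : ℝ) (u : ℝ × ℝ × ℝ) : ℝ × ℝ × ℝ := (x * u.1, x * u.2.1, x ^ 2 * u.2.2)

/-- Euclidean volume of the Cygan–Korányi unit ball. -/
def volB : ℝ := (volume cyganBall).toReal

/-- `N(x)`: the number of integer lattice points inside `δ_x B`. -/
def latticeCount (x : ℝ) : ℕ :=
  Set.ncard {p : ℤ × ℤ × ℤ | ((p.1 : ℝ), (p.2.1 : ℝ), (p.2.2 : ℝ)) ∈ heisDil x '' cyganBall}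

/-- The error term `E(x;ω)` for the shell count. -/
def Eshell (ω : ℝ → ℝ) (x : ℝ) : ℝ :=
  ((latticeCount (x + ω x) : ℝ) - (latticeCount x : ℝ))
    - volB * ∑ j ∈ Finset.Icc 1 4, (Nat.choose 4 j : ℝ) * x ^ (4 - j) * ω x ^ j

/-- The normalized error term `Ê(x;ω) = E(x;ω)/x²`. -/
def Ehat (ω : ℝ → ℝ) (x : ℝ) : ℝ := Eshell ω x / x ^ 2

/-- `σ(X;ω)`, the square root of the variance of `Ê(x;ω)` over `[X,2X]`. -/
def sigmaShell (ω : ℝ → ℝ) (X : ℝ) : ℝ :=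
  Real.sqrt ((1 / X) * ∫ x in X..(2 * X), Ehat ω x ^ 2)

/-- `M_j(X;ω) = (1/X)·∫_X^{2X} (ω(x)·log ω(x))^j dx`. -/
def Mom (j : ℕ) (X : ℝ) (ω : ℝ → ℝ) : ℝ :=
  (1 / X) * ∫ x in X..(2 * X), (ω x * Real.log (ω x)) ^ j

/-- `L_j(ω) = lim_{X→∞} M_j(X;ω)/M_2(X;ω)^{j/2}`. -/
def Llim (ω : ℝ → ℝ) (j : ℕ) : ℝ :=
  limUnder atTop fun X => Mom j X ω / Mom 2 X ω ^ (j / 2)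

/-- The Gaussian moment factor `j!/(2^{j/2}·(j/2)!)`. -/
def gaussMoment (j : ℕ) : ℝ :=
  (Nat.factorial j : ℝ) / (2 ^ (j / 2) * (Nat.factorial (j / 2) : ℝ))

/-- The regularity class `Ω` of gap width functions. -/
structure OmegaClass (ω : ℝ → ℝ) : Prop where
  contDiff : ContDiffOn ℝ 2 ω (Set.Ioi 0)
  pos : ∀ x, 0 < x → 0 < ω x
  tendsto_zero : Tendsto ω atTop (nhds 0)
  deriv_small : ∀ᶠ x in atTop, |deriv ω x| < 1 / 2
  zeros_bound : ∃ C > (0 : ℝ), ∃ ξ > (0 : ℝ), ∀ᶠ X in atTop,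
    {x ∈ Set.Icc X (2 * X) | deriv ω x = 0}.Finite ∧
    {x ∈ Set.Icc X (2 * X) | deriv (deriv ω) x = 0}.Finite ∧
    ({x ∈ Set.Icc X (2 * X) | deriv ω x = 0}.ncard : ℝ) *
        sSup (ω '' Set.Icc X (2 * X)) ≤ C * X ^ ((1 : ℝ) / 2) ∧
    ({x ∈ Set.Icc X (2 * X) | deriv (deriv ω) x = 0}.ncard : ℝ) ≤ C * X ^ (1 - ξ)
  mom2_lower : ∀ α > (0 : ℝ), ∃ c > (0 : ℝ), ∀ᶠ X in atTop, c * X ^ (-α) ≤ Mom 2 X ω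
  Llim_exists : ∀ j : ℕ, Even j →
    Tendsto (fun X => Mom j X ω / Mom 2 X ω ^ (j / 2)) atTop (nhds (Llim ω j))
  carleman : Tendsto (fun n => ∑ k ∈ Finset.range n,
      (gaussMoment (2 * (k + 1)) * Llim ω (2 * (k + 1))) ^
        ((-1 : ℝ) / (2 * ((k : ℝ) + 1)))) atTop atTop

/-- `r₂(m)`: the number of representations of `m` as a sum of two integer squares. -/
def r2 (m : ℕ) : ℕ := Set.ncard {p : ℤ × ℤ | p.1 ^ 2 + p.2 ^ 2 = (m : ℤ)}

/-- The sawtooth function `ψ(t) = t − ⌊t⌋ − 1/2`. -/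
def sawtooth (t : ℝ) : ℝ := t - ⌊t⌋ - 1 / 2

/-- The sawtooth sum `Ξ_ψ(x;ω)`. -/
def XiPsi (ω : ℝ → ℝ) (x : ℝ) : ℝ :=
  (∑ m ∈ Finset.Icc 1 ⌊(x + ω x) ^ 2⌋₊,
      (r2 m : ℝ) * sawtooth (Real.sqrt ((x + ω x) ^ 4 - (m : ℝ) ^ 2)))
    - ∑ m ∈ Finset.Icc 1 ⌊x ^ 2⌋₊, (r2 m : ℝ) * sawtooth (Real.sqrt (x ^ 4 - (m : ℝ) ^ 2))

/-!
The multiplicative input is an identity in `ℤ[i]`. Two elements `z`, `w` of the same norm can be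
written uniquely as `z = h' u` and `w = h ū` with `u` coprime to `ū` and `h'` a chosen associate
of `h`. Counting such pairs by norm gives `r₂² = p * r₂` (Dirichlet convolution), where `p n` is
the number of `u` of norm `n` coprime to their conjugate. Taking the greatest common divisor of the
coordinates out of `z`, and then a possible factor `1 + i`, expresses `r₂` as the convolution of
`p` with two sparse sequences.

The Gauss circle problem with error `O(√N)` gives `∑_{n ≤ N} r₂ n / n = π log N + O(1)`. Removing
the sparse factors, whose Dirichlet series at `1` are `π² / 6` and `3 / 2`, gives
`∑_{n ≤ N} p n / n = (4 / π) log N + O(1)`, so that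
`∑_{n ≤ N} r₂(n)² / n = 2 log² N + O(log N)`, the constant being `(4 / π) · π / 2`.

Finally `sin² (π √n w)` is replaced by `π² n w²` for `n` up to about `w⁻²`, and the remaining range
is bounded through `∑_{n ≤ N} r₂(n)² = O(N log N)`.
-/

section LogMean

open Finset
open scoped LSeries.notation

theorem sum_convolution {R : Type*} [Semiring R] (f g : ℕ → R) (N : ℕ) :
    ∑ n ∈ Ioc 0 N, (f ⍟ g) n = ∑ m ∈ Ioc 0 N, f m * ∑ k ∈ Ioc 0 (N / m), g k := by
  have hcoe (h : ℕ → R) {n M : ℕ} (hn : n ∈ Ioc 0 M) : toArithmeticFunction h n = h n :=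
    if_neg (mem_Ioc.1 hn).1.ne'
  rw [LSeries.convolution, ArithmeticFunction.sum_Ioc_mul_eq_sum_sum]
  exact sum_congr rfl fun m hm ↦ congr_arg₂ _ (hcoe f hm) (sum_congr rfl fun k hk ↦ hcoe g hk)

theorem sum_convolution_div (f g : ℕ → ℝ) (N : ℕ) :
    ∑ n ∈ Ioc 0 N, (f ⍟ g) n / n
      = ∑ m ∈ Ioc 0 N, f m / m * ∑ k ∈ Ioc 0 (N / m), g k / k := by
  rw [← sum_convolution (fun m ↦ f m / m) fun k ↦ g k / k]
  refine sum_congr rfl fun n _ ↦ ?_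
  simp only [LSeries.convolution_def, sum_div]
  refine sum_congr rfl fun p hp ↦ ?_
  rw [← (Nat.mem_divisorsAntidiagonal.1 hp).1, Nat.cast_mul, mul_div_mul_comm]

theorem inv_succ_le_log_succ_sub_log {N : ℕ} (hN : N ≠ 0) :
    ((N : ℝ) + 1)⁻¹ ≤ log (N + 1 : ℕ) - log N := by
  have hN' : (0 : ℝ) < N := by positivity
  have h := one_sub_inv_le_log_of_pos (x := ((N + 1 : ℕ) : ℝ) / N) (by positivity)
  rw [log_div (by positivity) hN'.ne'] at h
  refine le_trans (le_of_eq ?_) h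
  push_cast
  field_simp
  ring

theorem log_succ_sub_log_le_inv {N : ℕ} (hN : N ≠ 0) : log (N + 1 : ℕ) - log N ≤ (N : ℝ)⁻¹ := by
  have hN' : (0 : ℝ) < N := by positivity
  have h := log_le_sub_one_of_pos (x := ((N + 1 : ℕ) : ℝ) / N) (by positivity)
  rw [log_div (by positivity) hN'.ne'] at h
  refine h.trans (le_of_eq ?_)
  push_cast
  field_simp
  ring

theorem abs_log_div_sub_le {N m : ℕ} (hm : m ≠ 0) (h : m ≤ N) :
    |log (N / m : ℕ) - (log N - log m)| ≤ log 2 := by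
  have hm' : (0 : ℝ) < m := by positivity
  have hN : (0 : ℝ) < N := hm'.trans_le (by exact_mod_cast h)
  have hq : (1 : ℝ) ≤ (N / m : ℕ) := by exact_mod_cast Nat.div_pos h hm.bot_lt
  have hlower : ((N / m : ℕ) : ℝ) ≤ N / m := Nat.cast_div_le
  have hupper : (N : ℝ) / m ≤ 2 * (N / m : ℕ) := by
    rw [div_le_iff₀ hm']
    have : (N : ℝ) < m * ((N / m : ℕ) + 1) := by exact_mod_cast Nat.lt_mul_div_succ N hm.bot_lt
    nlinarith
  have hlog_lower := log_le_log (by positivity) hlower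
  have hlog_upper := log_le_log (by positivity) hupper
  rw [log_mul two_ne_zero (by positivity)] at hlog_upper
  rw [← log_div hN.ne' hm'.ne', abs_le]
  constructor <;> linarith [log_pos one_lt_two]

/-- `HasLogMean f c` says that `f` has logarithmic mean value `c` with bounded error,
`∑_{0 < n ≤ N} f n / n = c log N + O(1)`. -/
def HasLogMean (f : ℕ → ℝ) (c : ℝ) : Prop :=
  ∃ C, ∀ N : ℕ, |∑ n ∈ Ioc 0 N, f n / n - c * log N| ≤ C

theorem HasLogMean.congr {f g : ℕ → ℝ} {c : ℝ} (hf : HasLogMean f c)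
    (h : ∀ n, n ≠ 0 → f n = g n) : HasLogMean g c := by
  obtain ⟨C, hC⟩ := hf
  refine ⟨C, fun N ↦ ?_⟩
  convert hC N using 4 with n hn
  rw [h n (mem_Ioc.1 hn).1.ne']

theorem abs_harmonic_sub_log_le_one (N : ℕ) : |(harmonic N : ℝ) - log N| ≤ 1 := by
  rcases N.eq_zero_or_pos with rfl | hN
  · simp
  · have hlower := log_add_one_le_harmonic N
    have hupper := harmonic_le_one_add_log N
    have hmono : log N ≤ log ((N + 1 : ℕ) : ℝ) := log_le_log (by positivity) (by simp)
    rw [abs_le]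
    constructor <;> linarith

theorem inv_sqrt_mul_succ_le {N : ℕ} (hN : N ≠ 0) :
    (√N * (N + 1))⁻¹ ≤ 2 * ((√N)⁻¹ - (√(N + 1 : ℕ))⁻¹) := by
  have hs : 0 < √(N : ℝ) := by positivity
  have ht : 0 < √((N + 1 : ℕ) : ℝ) := by positivity
  have hs2 : √(N : ℝ) ^ 2 = N := sq_sqrt (by positivity)
  have ht2 : √((N + 1 : ℕ) : ℝ) ^ 2 = N + 1 := by rw [sq_sqrt (by positivity)]; push_cast; ring
  have hle : √(N : ℝ) ≤ √((N + 1 : ℕ) : ℝ) := sqrt_le_sqrt (by simp)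
  set s := √(N : ℝ)
  set t := √((N + 1 : ℕ) : ℝ)
  have : (t - s) * (t + s) = 1 := by linarith
  rw [← ht2, inv_sub_inv hs.ne' ht.ne', ← mul_div_assoc, inv_eq_one_div,
    div_le_div_iff₀ (by positivity) (by positivity)]
  nlinarith [mul_nonneg (mul_pos hs ht).le (mul_nonneg (sub_nonneg.2 hle) (sub_nonneg.2 hle))]

theorem abs_sum_div_sub_mean_le {h : ℕ → ℝ} {C : ℝ}
    (hC : ∀ N : ℕ, |∑ n ∈ Ioc 0 N, h n| ≤ C * √N) {N : ℕ} (hN : 1 ≤ N) :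
    |∑ n ∈ Ioc 0 N, h n / n - (∑ n ∈ Ioc 0 N, h n) / N| ≤ 2 * C * (1 - (√N)⁻¹) := by
  have hC0 : 0 ≤ C := by simpa using (abs_nonneg _).trans (hC 1)
  induction N, hN using Nat.le_induction with
  | base => simp
  | succ N hN ih =>
    have hincrement : |(∑ n ∈ Ioc 0 N, h n) / (N * (N + 1))|
        ≤ C * (2 * ((√N)⁻¹ - (√(N + 1 : ℕ))⁻¹)) := by
      have : (0 : ℝ) < √N := by positivity
      rw [abs_div, abs_of_pos (by positivity : (0 : ℝ) < N * (N + 1))]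
      calc |∑ n ∈ Ioc 0 N, h n| / (N * (N + 1)) ≤ C * √N / (N * (N + 1)) := by gcongr; exact hC N
        _ = C * (√N * (N + 1))⁻¹ := by
          nth_rw 2 [← mul_self_sqrt (Nat.cast_nonneg (α := ℝ) N)]
          field_simp
        _ ≤ _ := by gcongr; exact inv_sqrt_mul_succ_le (by lia)
    have htelescope : ∑ n ∈ Ioc 0 (N + 1), h n / n - (∑ n ∈ Ioc 0 (N + 1), h n) / (N + 1 : ℕ)
        = (∑ n ∈ Ioc 0 N, h n / n - (∑ n ∈ Ioc 0 N, h n) / N)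
          + (∑ n ∈ Ioc 0 N, h n) / (N * (N + 1)) := by
      rw [sum_Ioc_succ_top (by lia), sum_Ioc_succ_top (by lia)]
      push_cast
      field_simp
      ring
    rw [htelescope]
    linarith [abs_add_le (∑ n ∈ Ioc 0 N, h n / n - (∑ n ∈ Ioc 0 N, h n) / N)
      ((∑ n ∈ Ioc 0 N, h n) / (N * (N + 1)))]

theorem abs_sum_div_le_of_abs_sum_le_sqrt {h : ℕ → ℝ} {C : ℝ}
    (hC : ∀ N : ℕ, |∑ n ∈ Ioc 0 N, h n| ≤ C * √N) (N : ℕ) :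
    |∑ n ∈ Ioc 0 N, h n / n| ≤ 2 * C := by
  have hC0 : 0 ≤ C := by simpa using (abs_nonneg _).trans (hC 1)
  rcases Nat.eq_zero_or_pos N with rfl | hN
  · simpa using hC0
  have hmean : |(∑ n ∈ Ioc 0 N, h n) / N| ≤ C * (√N)⁻¹ := by
    rw [abs_div, Nat.abs_cast, div_le_iff₀ (by positivity), mul_assoc, inv_mul_eq_div, div_sqrt]
    exact hC N
  have hdev := abs_sum_div_sub_mean_le hC hN
  have htri := abs_add_le (∑ n ∈ Ioc 0 N, h n / n - (∑ n ∈ Ioc 0 N, h n) / N)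
    ((∑ n ∈ Ioc 0 N, h n) / N)
  rw [sub_add_cancel] at htri
  linarith [mul_nonneg hC0 (inv_nonneg.2 (sqrt_nonneg (N : ℝ)))]

theorem HasLogMean.of_abs_sum_sub_le_sqrt {f : ℕ → ℝ} {c C : ℝ}
    (h : ∀ N : ℕ, |∑ n ∈ Ioc 0 N, f n - c * N| ≤ C * √N) : HasLogMean f c := by
  refine ⟨2 * C + |c|, fun N ↦ ?_⟩
  have hdev : |∑ n ∈ Ioc 0 N, (f n - c) / n| ≤ 2 * C := by
    refine abs_sum_div_le_of_abs_sum_le_sqrt (fun M ↦ ?_) N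
    simpa [mul_comm] using h M
  have hsplit : ∑ n ∈ Ioc 0 N, f n / n - c * log N
      = ∑ n ∈ Ioc 0 N, (f n - c) / n + c * (harmonic N - log N) := by
    have hharm : (harmonic N : ℝ) = ∑ n ∈ Ioc 0 N, (n : ℝ)⁻¹ := by
      rw [harmonic_eq_sum_Icc]
      push_cast
      rfl
    simp only [div_eq_mul_inv, sub_mul, sum_sub_distrib, hharm, mul_sub, mul_sum]
    ring
  rw [hsplit]
  refine (abs_add_le _ _).trans (add_le_add hdev ?_)
  rw [abs_mul]
  exact mul_le_of_le_one_right (abs_nonneg c) (abs_harmonic_sub_log_le_one N)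

theorem abs_le_of_abs_sum_mul_div_le {a E : ℕ → ℝ} {S K : ℝ} (ha : ∀ m, 0 ≤ a m) (ha1 : a 1 = 1)
    (haS : HasSum a S) (hS : S < 2) (hE0 : E 0 = 0)
    (hK : ∀ N, |∑ m ∈ Ioc 0 N, a m * E (N / m)| ≤ K) (N : ℕ) : |E N| ≤ K / (2 - S) := by
  have hK0 : 0 ≤ K := (abs_nonneg _).trans (hK 0)
  have hB : 0 ≤ K / (2 - S) := div_nonneg hK0 (by linarith)
  induction N using Nat.strong_induction_on with
  | _ N ih =>
    rcases N.eq_zero_or_pos with rfl | hN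
    · simpa [hE0] using hB
    have hfirst : ∀ b : ℕ → ℝ, ∑ m ∈ Ioc 0 N, b m = b 1 + ∑ m ∈ Ioc 1 N, b m := fun b ↦ by
      rw [← sum_Ioc_consecutive b zero_le_one hN, show Ioc 0 1 = {1} from rfl, sum_singleton]
    have hweight : ∑ m ∈ Ioc 1 N, a m ≤ S - 1 := by
      have := sum_le_hasSum (Ioc 0 N) (fun m _ ↦ ha m) haS
      rw [hfirst, ha1] at this
      linarith
    have hrest : |∑ m ∈ Ioc 1 N, a m * E (N / m)| ≤ (S - 1) * (K / (2 - S)) := by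
      refine (abs_sum_le_sum_abs _ _).trans (le_trans (sum_le_sum fun m hm ↦ ?_)
        (mul_le_mul_of_nonneg_right hweight hB |>.trans_eq' (sum_mul ..)))
      rw [abs_mul, abs_of_nonneg (ha m)]
      exact mul_le_mul_of_nonneg_left (ih _ (Nat.div_lt_self hN (mem_Ioc.1 hm).1)) (ha m)
    have hsplit := hK N
    rw [hfirst fun m ↦ a m * E (N / m), ha1, one_mul, Nat.div_one] at hsplit
    have hfix : K + (S - 1) * (K / (2 - S)) = K / (2 - S) := by
      have : 2 - S ≠ 0 := by linarith
      field_simp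
      ring
    rw [abs_le] at hsplit hrest ⊢
    constructor <;> linarith

theorem abs_log_sub_log_div_le {m : ℕ} (hm : m ≠ 0) (N : ℕ) :
    |log N - log (N / m : ℕ)| ≤ log 2 + log m := by
  have hlog2 : 0 < log 2 := log_pos one_lt_two
  have hlogm : 0 ≤ log m := log_natCast_nonneg m
  rcases le_or_gt m N with h | h
  · have := abs_le.1 (abs_log_div_sub_le hm h)
    rw [abs_le]
    constructor <;> linarith
  · rcases N.eq_zero_or_pos with rfl | hN
    · simpa using by positivity
    have hle : log N ≤ log m := log_le_log (by positivity) (by exact_mod_cast h.le)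
    rw [Nat.div_eq_of_lt h, Nat.cast_zero, log_zero, sub_zero, abs_of_nonneg (log_natCast_nonneg N)]
    linarith

theorem abs_sum_mul_log_div_sub_le {a : ℕ → ℝ} {S : ℝ} (ha : ∀ m, 0 ≤ a m) (ha0 : a 0 = 0)
    (haS : HasSum a S) (hlog : Summable fun m ↦ a m * log m) (N : ℕ) :
    |∑ m ∈ Ioc 0 N, a m * log (N / m : ℕ) - S * log N| ≤ S * log 2 + ∑' m, a m * log m := by
  have hfinite : HasSum (fun m ↦ a m * log (N / m : ℕ)) (∑ m ∈ Ioc 0 N, a m * log (N / m : ℕ)) := by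
    refine hasSum_sum_of_ne_finset_zero fun m hm ↦ ?_
    rcases m.eq_zero_or_pos with rfl | hm0
    · simp
    · simp [Nat.div_eq_of_lt (by simpa [hm0] using hm : N < m)]
  have hdiff : HasSum (fun m ↦ a m * (log N - log (N / m : ℕ)))
      (S * log N - ∑ m ∈ Ioc 0 N, a m * log (N / m : ℕ)) := by
    simpa only [mul_sub] using (haS.mul_right _).sub hfinite
  have hbound : HasSum (fun m ↦ a m * (log 2 + log m)) (S * log 2 + ∑' m, a m * log m) := by
    simpa only [mul_add] using (haS.mul_right _).add hlog.hasSum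
  have hterm (m : ℕ) : ‖a m * (log N - log (N / m : ℕ))‖ ≤ a m * (log 2 + log m) := by
    rcases eq_or_ne m 0 with rfl | hm
    · simp [ha0]
    rw [norm_eq_abs, abs_mul, abs_of_nonneg (ha m)]
    exact mul_le_mul_of_nonneg_left (abs_log_sub_log_div_le hm N) (ha m)
  rw [abs_sub_comm, ← hdiff.tsum_eq, ← hbound.tsum_eq, ← norm_eq_abs]
  exact tsum_of_norm_bounded hbound hterm |>.trans_eq hbound.tsum_eq.symm

/- The error `E N = ∑_{n ≤ N} g n / n - (c / S) log N` satisfies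
`∑_{m ≤ N} (f m / m) E(⌊N / m⌋) = O(1)`; the term `m = 1` is `E N` and, as `S < 2`, the others have
total weight less than `1`. -/
theorem HasLogMean.of_convolution {f g : ℕ → ℝ} {c S : ℝ} (hf : ∀ n, 0 ≤ f n) (hf1 : f 1 = 1)
    (hfS : HasSum (fun m : ℕ ↦ f m / m) S) (hS : S < 2)
    (hlog : Summable fun m : ℕ ↦ f m / m * log m) (hfg : HasLogMean (f ⍟ g) c) :
    HasLogMean g (c / S) := by
  obtain ⟨C, hC⟩ := hfg
  have hweight (m : ℕ) : 0 ≤ f m / m := div_nonneg (hf m) m.cast_nonneg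
  have hS1 : 1 ≤ S := by simpa [hf1] using le_hasSum hfS 1 fun m _ ↦ hweight m
  refine ⟨_, abs_le_of_abs_sum_mul_div_le hweight (by simp [hf1]) hfS hS (by simp)
    (K := C + |c / S| * (S * log 2 + ∑' m : ℕ, f m / m * log m)) fun N ↦ ?_⟩
  have hfloor := abs_sum_mul_log_div_sub_le hweight (by simp) hfS hlog N
  have hsplit : ∑ m ∈ Ioc 0 N, f m / m *
        (∑ n ∈ Ioc 0 (N / m), g n / n - c / S * log (N / m : ℕ))
      = (∑ n ∈ Ioc 0 N, (f ⍟ g) n / n - c * log N)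
        - c / S * (∑ m ∈ Ioc 0 N, f m / m * log (N / m : ℕ) - S * log N) := by
    rw [sum_convolution_div, mul_sub, ← mul_assoc, div_mul_cancel₀ c (by linarith), mul_sum]
    simp only [mul_sub, sum_sub_distrib, mul_left_comm (c / S)]
    ring
  rw [hsplit]
  refine (abs_sub _ _).trans (add_le_add (hC N) ?_)
  rw [abs_mul]
  exact mul_le_mul_of_nonneg_left hfloor (abs_nonneg _)

theorem HasLogMean.exists_abs_sum_mul_log_sub_le {f : ℕ → ℝ} {c : ℝ} (hf : HasLogMean f c) :
    ∃ C, ∀ N : ℕ,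
      |∑ n ∈ Ioc 0 N, f n / n * (log N - log n) - c / 2 * log N ^ 2| ≤ C * log N := by
  obtain ⟨C, hC⟩ := hf
  refine ⟨C + |c|, fun N ↦ ?_⟩
  induction N with
  | zero => simp
  | succ N ih =>
    rcases eq_or_ne N 0 with rfl | hN
    · simp
    have ht0 : 0 ≤ log (N + 1 : ℕ) - log N :=
      (by positivity : (0 : ℝ) ≤ ((N : ℝ) + 1)⁻¹).trans (inv_succ_le_log_succ_sub_log hN)
    have ht1 : log (N + 1 : ℕ) - log N ≤ 1 :=
      (log_succ_sub_log_le_inv hN).trans (inv_le_one_of_one_le₀ (by exact_mod_cast hN.bot_lt))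
    set t := log (N + 1 : ℕ) - log N
    have hlog : log (N + 1 : ℕ) = log N + t := by ring
    have hincrement :
        ∑ n ∈ Ioc 0 (N + 1), f n / n * (log (N + 1 : ℕ) - log n) - c / 2 * log (N + 1 : ℕ) ^ 2
          = (∑ n ∈ Ioc 0 N, f n / n * (log N - log n) - c / 2 * log N ^ 2)
            + t * (∑ n ∈ Ioc 0 N, f n / n - c * log N) - c / 2 * t * t := by
      rw [sum_Ioc_succ_top (by lia), sub_self, mul_zero, add_zero, hlog]
      simp only [add_sub_right_comm, mul_add, sum_add_distrib, ← sum_mul]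
      ring
    have hlinear : |t * (∑ n ∈ Ioc 0 N, f n / n - c * log N)| ≤ C * t := by
      rw [abs_mul, abs_of_nonneg ht0, mul_comm]
      exact mul_le_mul_of_nonneg_right (hC N) ht0
    have hquadratic : |c / 2 * t * t| ≤ |c| * t := by
      rw [abs_mul, abs_mul, abs_of_nonneg ht0, abs_div, abs_two]
      nlinarith [mul_nonneg (abs_nonneg c) ht0]
    rw [hincrement, hlog, mul_add]
    rw [abs_le] at ih hlinear hquadratic ⊢
    constructor <;> linarith

theorem HasLogMean.exists_sum_le {f : ℕ → ℝ} {c : ℝ} (hf : HasLogMean f c) :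
    ∃ C, 0 ≤ C ∧ ∀ N : ℕ, ∑ n ∈ Ioc 0 N, f n / n ≤ C * (log N + 1) := by
  obtain ⟨C, hC⟩ := hf
  have hC0 : 0 ≤ C := (abs_nonneg _).trans (hC 0)
  refine ⟨C + |c|, by positivity, fun N ↦ ?_⟩
  nlinarith [(abs_le.1 (hC N)).2, mul_le_mul_of_nonneg_right (le_abs_self c)
    (log_natCast_nonneg N), log_natCast_nonneg N, abs_nonneg c]

theorem abs_sum_mul_sum_div_sub_le {f g : ℕ → ℝ} {b B : ℝ} (hf : ∀ n, 0 ≤ f n)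
    (hB : ∀ N : ℕ, |∑ n ∈ Ioc 0 N, g n / n - b * log N| ≤ B) (N : ℕ) :
    |∑ m ∈ Ioc 0 N, f m / m * (∑ n ∈ Ioc 0 (N / m), g n / n - b * (log N - log m))|
      ≤ (B + |b| * log 2) * ∑ m ∈ Ioc 0 N, f m / m := by
  have hinner {m : ℕ} (hm : m ∈ Ioc 0 N) :
      |∑ n ∈ Ioc 0 (N / m), g n / n - b * (log N - log m)| ≤ B + |b| * log 2 := by
    rw [mem_Ioc] at hm
    have hfloor := mul_le_mul_of_nonneg_left (abs_log_div_sub_le hm.1.ne' hm.2) (abs_nonneg b)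
    rw [← abs_mul] at hfloor
    rw [← sub_add_sub_cancel _ (b * log (N / m : ℕ)), ← mul_sub]
    exact (abs_add_le _ _).trans (add_le_add (hB (N / m)) hfloor)
  rw [mul_sum]
  refine (abs_sum_le_sum_abs _ _).trans (sum_le_sum fun m hm ↦ ?_)
  have hweight : 0 ≤ f m / m := div_nonneg (hf m) m.cast_nonneg
  rw [abs_mul, abs_of_nonneg hweight, mul_comm]
  exact mul_le_mul_of_nonneg_right (hinner hm) hweight

theorem HasLogMean.exists_abs_sum_convolution_div_sub_le {f g : ℕ → ℝ} {a b : ℝ}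
    (hf0 : ∀ n, 0 ≤ f n) (hf : HasLogMean f a) (hg : HasLogMean g b) :
    ∃ C, ∀ N : ℕ,
      |∑ n ∈ Ioc 0 N, (f ⍟ g) n / n - a * b / 2 * log N ^ 2| ≤ C * (log N + 1) := by
  obtain ⟨A, -, hA⟩ := hf.exists_sum_le
  obtain ⟨D, hD⟩ := hf.exists_abs_sum_mul_log_sub_le
  obtain ⟨B, hB⟩ := hg
  have hB0 : 0 ≤ B := (abs_nonneg _).trans (hB 0)
  refine ⟨(B + |b| * log 2) * A + |b| * |D|, fun N ↦ ?_⟩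
  have hsplit : ∑ n ∈ Ioc 0 N, (f ⍟ g) n / n - a * b / 2 * log N ^ 2
      = ∑ m ∈ Ioc 0 N, f m / m * (∑ n ∈ Ioc 0 (N / m), g n / n - b * (log N - log m))
        + b * (∑ m ∈ Ioc 0 N, f m / m * (log N - log m) - a / 2 * log N ^ 2) := by
    simp only [sum_convolution_div, mul_sub, sum_sub_distrib, mul_sum, mul_left_comm b]
    ring
  have herror := (abs_sum_mul_sum_div_sub_le hf0 hB N).trans
    (mul_le_mul_of_nonneg_left (hA N) (by have := log_pos one_lt_two; positivity))
  rw [hsplit]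
  refine (abs_add_le _ _).trans ?_
  rw [abs_mul]
  nlinarith [mul_le_mul_of_nonneg_left ((hD N).trans (mul_le_mul_of_nonneg_right (le_abs_self D)
    (log_natCast_nonneg N))) (abs_nonneg b), mul_nonneg (abs_nonneg b) (abs_nonneg D)]

end LogMean

section Truncation

open Finset

theorem abs_sin_sq_sub_sq_le (x : ℝ) : |sin x ^ 2 - x ^ 2| ≤ x ^ 4 := by
  wlog hx : 0 ≤ x
  · simpa [Even.neg_pow ⟨2, rfl⟩] using this (-x) (by linarith)
  rcases hx.eq_or_lt with rfl | hx
  · simp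
  have hlower : x - sin x ≤ x ^ 3 / 6 := by linarith [sin_gt_sub_cube hx]
  have habs : |sin x| < x := (abs_sin_lt_abs hx.ne').trans_eq (abs_of_pos hx)
  rw [abs_lt] at habs
  rw [abs_sub_comm, abs_of_nonneg (by linarith [sin_sq_le_sq (x := x)])]
  calc x ^ 2 - sin x ^ 2 = (x - sin x) * (x + sin x) := by ring
    _ ≤ x ^ 3 / 6 * (2 * x) := mul_le_mul hlower (by linarith) (by linarith) (by positivity)
    _ ≤ x ^ 4 := by nlinarith [pow_pos hx 4]

theorem log_two_mul_div_mul_succ_le {L : ℕ} (hL : 1 ≤ L) :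
    log (2 * L) / (L * (L + 1))
      ≤ (log (2 * L) + 2) / L - (log (2 * (L + 1 : ℕ)) + 2) / (L + 1 : ℕ) := by
  have hL0 : (0 : ℝ) < L := by positivity
  have hstep : L * (log (L + 1 : ℕ) - log L) ≤ 1 :=
    (mul_le_mul_of_nonneg_left (log_succ_sub_log_le_inv (by lia)) hL0.le).trans_eq
      (mul_inv_cancel₀ hL0.ne')
  rw [log_mul two_ne_zero hL0.ne', log_mul two_ne_zero (by positivity)]
  push_cast at hstep ⊢
  rw [div_sub_div _ _ hL0.ne' (by positivity)]
  gcongr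
  linarith

variable {s : ℕ → ℝ} {C : ℝ}

theorem nonneg_of_sum_le_mul_log (hs : ∀ n, 0 ≤ s n)
    (hS : ∀ N : ℕ, ∑ n ∈ Ioc 0 N, s n ≤ C * (N * log (2 * N))) : 0 ≤ C := by
  have h1 : 0 ≤ C * log 2 := by simpa using (sum_nonneg fun n _ ↦ hs n).trans (hS 1)
  exact nonneg_of_mul_nonneg_left h1 (log_pos one_lt_two)

/- Partial summation: the potential `(log (2 K) + 2) / K` decreases from `L` to `L + 1` by at least
`log (2 L) / (L (L + 1))`. -/
theorem sum_Ioc_div_sq_le_add (hs : ∀ n, 0 ≤ s n)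
    (hS : ∀ N : ℕ, ∑ n ∈ Ioc 0 N, s n ≤ C * (N * log (2 * N))) {K L : ℕ} (hK : 1 ≤ K)
    (hKL : K ≤ L) :
    ∑ n ∈ Ioc K L, s n / (n : ℝ) ^ 2 ≤ (∑ n ∈ Ioc 0 L, s n) / (L : ℝ) ^ 2
      + 2 * C * ((log (2 * K) + 2) / K - (log (2 * L) + 2) / L) := by
  have hC := nonneg_of_sum_le_mul_log hs hS
  induction L, hKL using Nat.le_induction with
  | base =>
    simp only [Ioc_self, sum_empty, sub_self, mul_zero, add_zero]
    exact div_nonneg (sum_nonneg fun n _ ↦ hs n) (sq_nonneg _)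
  | succ L hL ih =>
    have hL1 : (1 : ℝ) ≤ L := by exact_mod_cast hK.trans hL
    rw [sum_Ioc_succ_top hL, sum_Ioc_succ_top L.zero_le, add_div]
    have hdrop : (∑ n ∈ Ioc 0 L, s n) / (L : ℝ) ^ 2 - (∑ n ∈ Ioc 0 L, s n) / ((L + 1 : ℕ) : ℝ) ^ 2
        ≤ 2 * C * (log (2 * L) / (L * (L + 1))) := by
      push_cast
      calc _ = (∑ n ∈ Ioc 0 L, s n) * ((2 * L + 1) / (L ^ 2 * (L + 1) ^ 2)) := by field_simp; ring
        _ ≤ C * (L * log (2 * L)) * ((2 * (L + 1)) / (L ^ 2 * (L + 1) ^ 2)) := by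
          have := log_nonneg (by linarith : (1 : ℝ) ≤ 2 * L)
          gcongr
          · exact hS L
          · linarith
        _ = _ := by field_simp
    linarith [mul_le_mul_of_nonneg_left (log_two_mul_div_mul_succ_le (hK.trans hL))
      (by linarith : 0 ≤ 2 * C)]

theorem sum_Ioc_div_sq_le (hs : ∀ n, 0 ≤ s n)
    (hS : ∀ N : ℕ, ∑ n ∈ Ioc 0 N, s n ≤ C * (N * log (2 * N))) {K L : ℕ} (hK : 1 ≤ K)
    (hKL : K ≤ L) : ∑ n ∈ Ioc K L, s n / (n : ℝ) ^ 2 ≤ 10 * C * (log (2 * K) / K) := by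
  have hC := nonneg_of_sum_le_mul_log hs hS
  have hK1 : (1 : ℝ) ≤ K := by exact_mod_cast hK
  have hL1 : (1 : ℝ) ≤ L := by exact_mod_cast hK.trans hKL
  have hmean : (∑ n ∈ Ioc 0 L, s n) / (L : ℝ) ^ 2 ≤ 2 * C * ((log (2 * L) + 2) / L) := by
    have := log_nonneg (by linarith : (1 : ℝ) ≤ 2 * L)
    calc _ ≤ C * (L * log (2 * L)) / (L : ℝ) ^ 2 := by gcongr; exact hS L
      _ = C * (log (2 * L) / L) := by field_simp
      _ ≤ 2 * C * ((log (2 * L) + 2) / L) := by gcongr <;> linarith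
  have hlogK : (log (2 * K) + 2) / K ≤ 5 * (log (2 * K) / K) := by
    have : log 2 ≤ log (2 * (K : ℝ)) := log_le_log two_pos (by linarith)
    rw [← mul_div_assoc]
    gcongr
    linarith [log_two_gt_d9]
  linarith [sum_Ioc_div_sq_le_add hs hS hK hKL, mul_le_mul_of_nonneg_left hlogK
    (by linarith : 0 ≤ 2 * C)]

variable {w : ℝ} {M : ℕ}

theorem exists_cutoff (hw : 0 < w) (hw1 : w ≤ 1) :
    ∃ M : ℕ, 1 ≤ M ∧ M * w ^ 2 ≤ 1 ∧ 1 ≤ 2 * M * w ^ 2 := by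
  have hw2 : 0 < w ^ 2 := by positivity
  have hone : 1 ≤ 1 / w ^ 2 := (one_le_div₀ hw2).2 (pow_le_one₀ hw.le hw1)
  have hM : 1 ≤ ⌊1 / w ^ 2⌋₊ := (Nat.one_le_floor_iff _).2 hone
  refine ⟨_, hM, (le_div_iff₀ hw2).1 (Nat.floor_le (by positivity)), (div_le_iff₀ hw2).1 ?_⟩
  have : (1 : ℝ) ≤ ⌊1 / w ^ 2⌋₊ := by exact_mod_cast hM
  linarith [Nat.lt_floor_add_one (1 / w ^ 2)]

theorem log_cutoff_le (hw : 0 < w) (hM : 1 ≤ M) (hle : M * w ^ 2 ≤ 1) :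
    log M ≤ -2 * log w := by
  have := log_nonpos (by positivity) hle
  rw [log_mul (by positivity) (by positivity), log_pow] at this
  push_cast at this
  linarith

theorem le_log_cutoff (hw : 0 < w) (hM : 1 ≤ M) (hge : 1 ≤ 2 * M * w ^ 2) :
    -2 * log w - 1 ≤ log M := by
  have := log_nonneg hge
  rw [log_mul (by positivity) (by positivity), log_mul two_ne_zero (by positivity), log_pow] at this
  push_cast at this
  linarith [log_two_lt_d9]

theorem log_two_mul_cutoff_le (hw : 0 < w) (hlog : log w ≤ -1) (hM : 1 ≤ M) (hle : M * w ^ 2 ≤ 1) :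
    log (2 * M) ≤ 3 * |log w| := by
  rw [log_mul two_ne_zero (by positivity), abs_of_nonpos (by linarith)]
  linarith [log_cutoff_le hw hM hle, log_two_lt_d9]

theorem abs_sum_div_cutoff_sub_le {κ B : ℝ}
    (hT : ∀ N : ℕ, |∑ n ∈ Ioc 0 N, s n / n - κ * log N ^ 2| ≤ B * (log N + 1))
    (hw : 0 < w) (hlog : log w ≤ -1) (hM : 1 ≤ M) (hle : M * w ^ 2 ≤ 1)
    (hge : 1 ≤ 2 * M * w ^ 2) :
    |∑ n ∈ Ioc 0 M, s n / n - 4 * κ * log w ^ 2| ≤ (3 * B + 4 * |κ|) * |log w| := by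
  have hB : 0 ≤ B := by simpa using (abs_nonneg _).trans (hT 1)
  have hupper := log_cutoff_le hw hM hle
  have hlower := le_log_cutoff hw hM hge
  have := log_natCast_nonneg M
  rw [abs_of_nonpos (by linarith : log w ≤ 0)]
  calc |∑ n ∈ Ioc 0 M, s n / n - 4 * κ * log w ^ 2|
      = |(∑ n ∈ Ioc 0 M, s n / n - κ * log M ^ 2)
          + κ * ((log M + 2 * log w) * (log M - 2 * log w))| := by ring_nf
    _ ≤ B * (log M + 1) + |κ| * (1 * (-4 * log w)) := by
      refine (abs_add_le _ _).trans (add_le_add (hT M) ?_)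
      rw [abs_mul, abs_mul]
      gcongr <;> rw [abs_le] <;> constructor <;> linarith
    _ ≤ (3 * B + 4 * |κ|) * -log w := by
      nlinarith [mul_le_mul_of_nonneg_left (by linarith : log M + 1 ≤ -3 * log w) hB]

theorem abs_sum_mul_sin_sq_sub_le (hs : ∀ n, 0 ≤ s n)
    (hS : ∀ N : ℕ, ∑ n ∈ Ioc 0 N, s n ≤ C * (N * log (2 * N))) (α : ℝ)
    (hw : 0 < w) (hlog : log w ≤ -1) (hM : 1 ≤ M) (hle : M * w ^ 2 ≤ 1) :
    |∑ n ∈ Ioc 0 M, s n / (n : ℝ) ^ 2 * sin (α * √n * w) ^ 2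
        - α ^ 2 * w ^ 2 * ∑ n ∈ Ioc 0 M, s n / n| ≤ 3 * α ^ 4 * C * (w ^ 2 * |log w|) := by
  have hC := nonneg_of_sum_le_mul_log hs hS
  have hterm {n : ℕ} (hn : n ∈ Ioc 0 M) :
      |s n / (n : ℝ) ^ 2 * sin (α * √n * w) ^ 2 - α ^ 2 * w ^ 2 * (s n / n)|
        ≤ α ^ 4 * w ^ 4 * s n := by
    have hn0 : (n : ℝ) ≠ 0 := by exact_mod_cast (mem_Ioc.1 hn).1.ne'
    have hsq : (α * √n * w) ^ 2 = α ^ 2 * n * w ^ 2 := by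
      rw [mul_pow, mul_pow, sq_sqrt n.cast_nonneg]
    have hsin := abs_sin_sq_sub_sq_le (α * √n * w)
    rw [show (α * √n * w) ^ 4 = ((α * √n * w) ^ 2) ^ 2 by ring, hsq] at hsin
    calc _ = |s n / (n : ℝ) ^ 2 * (sin (α * √n * w) ^ 2 - α ^ 2 * n * w ^ 2)| := by
          congr 1
          field_simp
      _ = s n / (n : ℝ) ^ 2 * |sin (α * √n * w) ^ 2 - α ^ 2 * n * w ^ 2| := by
          rw [abs_mul, abs_of_nonneg (div_nonneg (hs n) (sq_nonneg _))]
      _ ≤ s n / (n : ℝ) ^ 2 * (α ^ 2 * n * w ^ 2) ^ 2 :=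
          mul_le_mul_of_nonneg_left hsin (div_nonneg (hs n) (sq_nonneg _))
      _ = α ^ 4 * w ^ 4 * s n := by field_simp
  rw [mul_sum, ← sum_sub_distrib]
  calc _ ≤ α ^ 4 * w ^ 4 * ∑ n ∈ Ioc 0 M, s n := by
        rw [mul_sum]
        exact (abs_sum_le_sum_abs _ _).trans (sum_le_sum fun n hn ↦ hterm hn)
    _ ≤ α ^ 4 * w ^ 4 * (C * (M * log (2 * M))) := by gcongr; exact hS M
    _ = α ^ 4 * C * w ^ 2 * ((M * w ^ 2) * log (2 * M)) := by ring
    _ ≤ α ^ 4 * C * w ^ 2 * (1 * (3 * |log w|)) := by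
        have : (1 : ℝ) ≤ M := by exact_mod_cast hM
        have := log_nonneg (by linarith : (1 : ℝ) ≤ 2 * M)
        gcongr
        exact log_two_mul_cutoff_le hw hlog hM hle
    _ = _ := by ring

theorem log_two_mul_floor_div_floor_le {Y : ℝ} (hY : 1 ≤ Y) :
    log (2 * ⌊Y⌋₊) / ⌊Y⌋₊ ≤ 2 * (Y⁻¹ * log (2 * Y)) := by
  have hfloor : (1 : ℝ) ≤ ⌊Y⌋₊ := by exact_mod_cast (Nat.one_le_floor_iff _).2 hY
  have hlog : 0 ≤ log (2 * Y) := log_nonneg (by linarith)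
  calc log (2 * ⌊Y⌋₊) / ⌊Y⌋₊ ≤ log (2 * Y) / (Y / 2) := by
        gcongr
        · exact Nat.floor_le (by linarith)
        · linarith [Nat.lt_floor_add_one Y]
    _ = _ := by field_simp

theorem log_two_mul_cutoff_div_cutoff_le (hw : 0 < w) (hlog : log w ≤ -1) (hM : 1 ≤ M)
    (hle : M * w ^ 2 ≤ 1) (hge : 1 ≤ 2 * M * w ^ 2) :
    log (2 * M) / M ≤ 6 * (w ^ 2 * |log w|) := by
  rw [div_le_iff₀ (by positivity)]
  calc log (2 * M) ≤ 3 * |log w| := log_two_mul_cutoff_le hw hlog hM hle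
    _ ≤ 3 * |log w| * (2 * M * w ^ 2) := le_mul_of_one_le_right (by positivity) hge
    _ = _ := by ring

theorem abs_sum_floor_sub_sum_cutoff_le (hs : ∀ n, 0 ≤ s n)
    (hS : ∀ N : ℕ, ∑ n ∈ Ioc 0 N, s n ≤ C * (N * log (2 * N))) {φ : ℕ → ℝ}
    (hφ0 : ∀ n, 0 ≤ φ n) (hφ1 : ∀ n, φ n ≤ 1) (hw : 0 < w) (hlog : log w ≤ -1) (hM : 1 ≤ M)
    (hle : M * w ^ 2 ≤ 1) (hge : 1 ≤ 2 * M * w ^ 2) {Y : ℝ} (hY : 1 ≤ Y) :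
    |∑ n ∈ Ioc 0 ⌊Y⌋₊, s n / (n : ℝ) ^ 2 * φ n - ∑ n ∈ Ioc 0 M, s n / (n : ℝ) ^ 2 * φ n|
      ≤ 60 * C * (w ^ 2 * |log w| + Y⁻¹ * log (2 * Y)) := by
  have hC := nonneg_of_sum_le_mul_log hs hS
  have hweight (n : ℕ) : 0 ≤ s n / (n : ℝ) ^ 2 := div_nonneg (hs n) (sq_nonneg _)
  have htail {K L : ℕ} (hK : 1 ≤ K) (hKL : K ≤ L) :
      |∑ n ∈ Ioc 0 L, s n / (n : ℝ) ^ 2 * φ n - ∑ n ∈ Ioc 0 K, s n / (n : ℝ) ^ 2 * φ n|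
        ≤ 10 * C * (log (2 * K) / K) := by
    rw [← sum_Ioc_consecutive _ K.zero_le hKL, add_sub_cancel_left,
      abs_of_nonneg (sum_nonneg fun n _ ↦ mul_nonneg (hweight n) (hφ0 n))]
    exact (sum_le_sum fun n _ ↦ mul_le_of_le_one_right (hweight n) (hφ1 n)).trans
      (sum_Ioc_div_sq_le hs hS hK hKL)
  have hY0 : 0 ≤ Y⁻¹ * log (2 * Y) :=
    mul_nonneg (inv_nonneg.2 (by linarith)) (log_nonneg (by linarith))
  have hw0 : 0 ≤ w ^ 2 * |log w| := by positivity
  rcases le_total M ⌊Y⌋₊ with h | h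
  · calc _ ≤ 10 * C * (log (2 * M) / M) := htail hM h
      _ ≤ 10 * C * (6 * (w ^ 2 * |log w| + Y⁻¹ * log (2 * Y))) := by
        gcongr
        linarith [log_two_mul_cutoff_div_cutoff_le hw hlog hM hle hge]
      _ = _ := by ring
  · rw [abs_sub_comm]
    calc _ ≤ 10 * C * (log (2 * ⌊Y⌋₊) / ⌊Y⌋₊) := htail ((Nat.one_le_floor_iff _).2 hY) h
      _ ≤ 10 * C * (6 * (w ^ 2 * |log w| + Y⁻¹ * log (2 * Y))) := by
        gcongr
        linarith [log_two_mul_floor_div_floor_le hY]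
      _ = _ := by ring

theorem exists_abs_sum_mul_sin_sq_sub_le {κ B : ℝ} (hs : ∀ n, 0 ≤ s n)
    (hT : ∀ N : ℕ, |∑ n ∈ Ioc 0 N, s n / n - κ * log N ^ 2| ≤ B * (log N + 1))
    (hS : ∀ N : ℕ, ∑ n ∈ Ioc 0 N, s n ≤ C * (N * log (2 * N))) (α : ℝ) :
    ∃ D > 0, ∀ w : ℝ, 0 < w → w < exp (-1) → ∀ Y : ℝ, 1 ≤ Y →
      |∑ n ∈ Ioc 0 ⌊Y⌋₊, s n / (n : ℝ) ^ 2 * sin (α * √n * w) ^ 2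
          - 4 * κ * α ^ 2 * w ^ 2 * log w ^ 2|
        ≤ D * (w ^ 2 * |log w| + Y⁻¹ * log (2 * Y)) := by
  have hC := nonneg_of_sum_le_mul_log hs hS
  have hB : 0 ≤ B := by simpa using (abs_nonneg _).trans (hT 1)
  refine ⟨60 * C + 3 * α ^ 4 * C + α ^ 2 * (3 * B + 4 * |κ|) + 1, by positivity,
    fun w hw hwe Y hY ↦ ?_⟩
  have hlog : log w ≤ -1 := (log_le_log hw hwe.le).trans_eq (log_exp _)
  obtain ⟨M, hM, hle, hge⟩ := exists_cutoff hw (hwe.le.trans (exp_le_one_iff.2 (by norm_num)))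
  have hcut := abs_sum_floor_sub_sum_cutoff_le hs hS (φ := fun n ↦ sin (α * √n * w) ^ 2)
    (fun _ ↦ sq_nonneg _) (fun _ ↦ sin_sq_le_one _) hw hlog hM hle hge hY
  have hsin := abs_sum_mul_sin_sq_sub_le hs hS α hw hlog hM hle
  have hmain := mul_le_mul_of_nonneg_left (abs_sum_div_cutoff_sub_le hT hw hlog hM hle hge)
    (by positivity : 0 ≤ α ^ 2 * w ^ 2)
  rw [← abs_of_nonneg (by positivity : 0 ≤ α ^ 2 * w ^ 2), ← abs_mul,
    abs_of_nonneg (by positivity : 0 ≤ α ^ 2 * w ^ 2)] at hmain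
  have hY0 : 0 ≤ Y⁻¹ * log (2 * Y) :=
    mul_nonneg (inv_nonneg.2 (by linarith)) (log_nonneg (by linarith))
  have hw0 : 0 ≤ w ^ 2 * |log w| := by positivity
  have hrest : 0 ≤ (3 * α ^ 4 * C + α ^ 2 * (3 * B + 4 * |κ|)) * (Y⁻¹ * log (2 * Y)) := by
    positivity
  rw [abs_le] at hcut hsin hmain ⊢
  constructor <;> linarith

end Truncation

section GaussianNorm

open Finset

theorem gaussianInt_norm_eq_sq_add_sq (z : GaussianInt) : z.norm = z.re ^ 2 + z.im ^ 2 := by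
  rw [Zsqrtd.norm_def]
  ring

theorem finite_gaussianInt_norm_eq (n : ℕ) : {z : GaussianInt | z.norm = n}.Finite := by
  refine Set.Finite.of_finite_image (f := fun z ↦ (z.re, z.im)) ?_ fun z _ w _ h ↦
    Zsqrtd.ext (congr_arg Prod.fst h) (congr_arg Prod.snd h)
  refine ((Set.finite_Icc (-n : ℤ) n).prod (Set.finite_Icc (-n : ℤ) n)).subset ?_
  rintro _ ⟨z, hz, rfl⟩
  rw [Set.mem_ofPred_eq, gaussianInt_norm_eq_sq_add_sq] at hz
  simp only [Set.mem_prod, Set.mem_Icc]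
  refine ⟨⟨?_, ?_⟩, ?_, ?_⟩ <;>
    nlinarith [Int.le_self_sq z.re, Int.le_self_sq z.im, Int.le_self_sq (-z.re),
      Int.le_self_sq (-z.im), sq_nonneg z.re, sq_nonneg z.im]

/-- The Gaussian integers of norm `n`; there are `r2 n` of them. -/
def normFiber (n : ℕ) : Finset GaussianInt := (finite_gaussianInt_norm_eq n).toFinset

open Classical in
/-- The Gaussian integers of norm `n` that are coprime to their conjugate. -/
def primitiveFiber (n : ℕ) : Finset GaussianInt := {u ∈ normFiber n | IsCoprime u (star u)}

/-- The Gaussian integers of norm `n` with coprime coordinates, that is, the lattice points on the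
circle of radius `√n` visible from the origin. -/
def visibleFiber (n : ℕ) : Finset GaussianInt := {z ∈ normFiber n | Int.gcd z.re z.im = 1}

variable {n : ℕ} {z w u g g' : GaussianInt}

theorem mem_normFiber : z ∈ normFiber n ↔ z.norm = n := by simp [normFiber]

theorem mem_primitiveFiber : u ∈ primitiveFiber n ↔ u.norm = n ∧ IsCoprime u (star u) := by
  simp [primitiveFiber, mem_normFiber]

theorem mem_visibleFiber : z ∈ visibleFiber n ↔ z.norm = n ∧ Int.gcd z.re z.im = 1 := by
  simp [visibleFiber, mem_normFiber]

theorem r2_eq_card_normFiber (n : ℕ) : r2 n = #(normFiber n) := by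
  rw [r2, ← Set.ncard_coe_finset]
  refine Set.ncard_congr (fun p _ ↦ ⟨p.1, p.2⟩) (fun p hp ↦ ?_) (fun p q _ _ h ↦ ?_)
    fun z hz ↦ ⟨(z.re, z.im), ?_, rfl⟩
  · simpa [mem_normFiber, gaussianInt_norm_eq_sq_add_sq] using hp
  · exact Prod.ext (congr_arg Zsqrtd.re h) (congr_arg Zsqrtd.im h)
  · simpa [mem_normFiber, gaussianInt_norm_eq_sq_add_sq] using hz

theorem ne_zero_of_gaussianInt_norm_eq (hn : n ≠ 0) (hz : z.norm = n) : z ≠ 0 := by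
  rintro rfl
  exact hn (by simpa using hz.symm)

theorem dvd_of_dvd_mul_of_dvd_mul_star (hu : IsCoprime u (star u)) (h : g' ∣ g * u)
    (h' : g' ∣ g * star u) : g' ∣ g := by
  obtain ⟨a, b, hab⟩ := hu
  have : g = (g * u) * a + (g * star u) * b := by linear_combination -g * hab
  rw [this]
  exact dvd_add (h.mul_right _) (h'.mul_right _)

/- With `g = gcd(z, w)`, `z = g u` and `w = g v`, the coprime `u` and `v` satisfy `u ū = v v̄`, so
`u` divides `v̄` and the quotient is a unit. -/
theorem exists_eq_mul_and_eq_mul_star (hz : z ≠ 0) (h : z.norm = w.norm) :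
    ∃ g u e : GaussianInt, IsUnit e ∧ IsCoprime u (star u) ∧ z = g * u ∧ w = g * e * star u := by
  obtain ⟨u, hu⟩ := EuclideanDomain.gcd_dvd_left z w
  obtain ⟨v, hv⟩ := EuclideanDomain.gcd_dvd_right z w
  have hbezout := EuclideanDomain.gcd_eq_gcd_ab z w
  set g := EuclideanDomain.gcd z w
  have hg : g ≠ 0 := fun h0 ↦ hz (by rw [hu, h0, zero_mul])
  have hu0 : u ≠ 0 := fun h0 ↦ hz (by rw [hu, h0, mul_zero])
  have hcoprime : IsCoprime u v := by
    refine ⟨EuclideanDomain.gcdA z w, EuclideanDomain.gcdB z w, mul_left_cancel₀ hg ?_⟩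
    linear_combination -hbezout - EuclideanDomain.gcdA z w * hu - EuclideanDomain.gcdB z w * hv
  have hnorm : u.norm = v.norm := by
    rw [hu, hv, Zsqrtd.norm_mul, Zsqrtd.norm_mul] at h
    exact mul_left_cancel₀ (mt GaussianInt.norm_eq_zero.1 hg) h
  have hmul : u * star u = v * star v := by
    rw [← Zsqrtd.norm_eq_mul_conj, ← Zsqrtd.norm_eq_mul_conj, hnorm]
  obtain ⟨t, ht⟩ : u ∣ star v := hcoprime.dvd_of_dvd_mul_left ⟨star u, hmul.symm⟩
  have hv' : v = star t * star u := by rw [← star_star v, ht, star_mul]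
  have htnorm : t.norm = 1 := by
    refine mul_left_cancel₀ (mt GaussianInt.norm_eq_zero.1 hu0) ?_
    rw [← Zsqrtd.norm_mul, ← ht, Zsqrtd.norm_conj, mul_one, hnorm]
  refine ⟨g, u, star t, ?_, ?_, hu, by rw [hv, hv', mul_assoc]⟩
  · rw [← Zsqrtd.norm_eq_one_iff' (by norm_num), Zsqrtd.norm_conj, htnorm]
  · rw [hv'] at hcoprime
    exact hcoprime.of_mul_right_right

/-- A representative of the class of `h` up to units, depending only on that class. -/
def associateRep (h : GaussianInt) : GaussianInt := Quot.out (Associates.mk h)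

theorem associated_associateRep (h : GaussianInt) : Associated (associateRep h) h :=
  Associates.mk_quot_out h

theorem associateRep_eq_of_associated (h : Associated g g') :
    associateRep g = associateRep g' := by
  rw [associateRep, Associates.mk_eq_mk_iff_associated.2 h, associateRep]

theorem gaussianInt_norm_eq_of_associated (h : Associated g g') : g.norm = g'.norm :=
  Zsqrtd.norm_eq_of_associated (by norm_num) h

theorem gaussianInt_norm_associateRep (h : GaussianInt) : (associateRep h).norm = h.norm :=
  gaussianInt_norm_eq_of_associated (associated_associateRep h)

theorem associateRep_dvd_associateRep {h h' u u' : GaussianInt} (hu : IsCoprime u (star u))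
    (h1 : associateRep h * u = associateRep h' * u') (h2 : h * star u = h' * star u') :
    associateRep h' ∣ associateRep h := by
  refine dvd_of_dvd_mul_of_dvd_mul_star hu (h1 ▸ dvd_mul_right _ _) ?_
  rw [((associated_associateRep h).mul_right (star u)).dvd_iff_dvd_right, h2]
  exact (associated_associateRep h').dvd.mul_right _

theorem associateRep_mul_injective {h h' u u' : GaussianInt} (hh : h ≠ 0) (hu0 : u ≠ 0)
    (hu : IsCoprime u (star u)) (hu' : IsCoprime u' (star u'))
    (h1 : associateRep h * u = associateRep h' * u') (h2 : h * star u = h' * star u') :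
    h = h' ∧ u = u' := by
  have hassoc : Associated h h' :=
    (associated_associateRep h).symm.trans <|
      (associated_of_dvd_dvd (associateRep_dvd_associateRep hu' h1.symm h2.symm)
        (associateRep_dvd_associateRep hu h1 h2)).trans (associated_associateRep h')
  rw [← associateRep_eq_of_associated hassoc] at h1
  have huu : u = u' := mul_left_cancel₀ ((associated_associateRep h).ne_zero_iff.2 hh) h1
  rw [← huu] at h2
  exact ⟨mul_right_cancel₀ (star_ne_zero.2 hu0) h2, huu⟩

theorem exists_associateRep_mul_eq (hz : z ≠ 0) (h : z.norm = w.norm) :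
    ∃ u h : GaussianInt, IsCoprime u (star u) ∧ associateRep h * u = z ∧ h * star u = w := by
  obtain ⟨g, u, e, he, hu, rfl, rfl⟩ := exists_eq_mul_and_eq_mul_star hz h
  obtain ⟨t, ht⟩ : Associated (associateRep (g * e)) g :=
    (associated_associateRep _).trans (associated_mul_unit_left g e he)
  have ht1 : (t : GaussianInt) * star (t : GaussianInt) = 1 := by
    rw [← Zsqrtd.norm_eq_mul_conj, (Zsqrtd.norm_eq_one_iff' (by norm_num) _).2 t.isUnit,
      Int.cast_one]
  refine ⟨t * u, g * e * t, ?_, ?_, ?_⟩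
  · rw [star_mul, mul_comm (star u)]
    exact (isCoprime_mul_unit_left_left t.isUnit _ _).2
      ((isCoprime_mul_unit_left_right t.isUnit.star _ _).2 hu)
  · rw [associateRep_eq_of_associated (associated_mul_unit_left (g * e) t t.isUnit), ← mul_assoc,
      ht]
  · rw [star_mul]
    linear_combination (g * e * star u) * ht1

theorem r2_sq_eq_sum_divisorsAntidiagonal (hn : n ≠ 0) :
    r2 n ^ 2 = ∑ p ∈ n.divisorsAntidiagonal, #(primitiveFiber p.1) * r2 p.2 := by
  simp only [r2_eq_card_normFiber, sq, ← card_product, ← card_sigma]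
  symm
  refine card_nbij (fun x ↦ (associateRep x.2.2 * x.2.1, x.2.2 * star x.2.1)) ?_ ?_ ?_
  · rintro ⟨p, u, h⟩ hx
    obtain ⟨⟨hp, -⟩, ⟨hu, -⟩, hh⟩ := by
      simpa [mem_primitiveFiber, mem_normFiber] using hx
    simp [mem_normFiber, Zsqrtd.norm_mul, Zsqrtd.norm_conj, gaussianInt_norm_associateRep, hu, hh,
      ← hp, mul_comm]
  · rintro ⟨⟨a, b⟩, u, h⟩ hx ⟨⟨a', b'⟩, u', h'⟩ hx' heq
    obtain ⟨⟨hp, -⟩, ⟨hu, hcu⟩, hh⟩ := by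
      simpa [mem_primitiveFiber, mem_normFiber] using hx
    obtain ⟨-, ⟨hu', hcu'⟩, hh'⟩ := by
      simpa [mem_primitiveFiber, mem_normFiber] using hx'
    have hab : a ≠ 0 ∧ b ≠ 0 := mul_ne_zero_iff.1 (hp ▸ hn)
    obtain ⟨rfl, rfl⟩ := associateRep_mul_injective (ne_zero_of_gaussianInt_norm_eq hab.2 hh)
      (ne_zero_of_gaussianInt_norm_eq hab.1 hu) hcu hcu' (congr_arg Prod.fst heq)
      (congr_arg Prod.snd heq)
    obtain rfl : a = a' := by exact_mod_cast hu.symm.trans hu'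
    obtain rfl : b = b' := by exact_mod_cast hh.symm.trans hh'
    rfl
  · rintro ⟨z, w⟩ hzw
    obtain ⟨hz, hw⟩ := by simpa [mem_normFiber] using hzw
    obtain ⟨u, h, hu, hzeq, hweq⟩ :=
      exists_associateRep_mul_eq (ne_zero_of_gaussianInt_norm_eq hn hz) (hz.trans hw.symm)
    have hnorm : u.norm.natAbs * h.norm.natAbs = n := by
      rw [← Int.natAbs_mul, mul_comm, ← Zsqrtd.norm_conj u, ← Zsqrtd.norm_mul, hweq, hw,
        Int.natAbs_natCast]
    refine ⟨⟨(u.norm.natAbs, h.norm.natAbs), u, h⟩, ?_, Prod.ext hzeq hweq⟩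
    simp [mem_primitiveFiber, mem_normFiber, hnorm, hn, hu, abs_of_nonneg, GaussianInt.norm_nonneg]

end GaussianNorm

section VisiblePoints

open Finset

variable {n : ℕ} {z u : GaussianInt}

theorem gcd_natCast_mul (k : ℕ) (z : GaussianInt) :
    Int.gcd ((k : GaussianInt) * z).re ((k : GaussianInt) * z).im = k * Int.gcd z.re z.im := by
  simp [Int.gcd_mul_left]

theorem exists_eq_gcd_mul (hz : z ≠ 0) :
    ∃ u : GaussianInt, Int.gcd u.re u.im = 1 ∧ z = (Int.gcd z.re z.im : GaussianInt) * u := by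
  obtain ⟨x, hx⟩ := Int.gcd_dvd_left z.re z.im
  obtain ⟨y, hy⟩ := Int.gcd_dvd_right z.re z.im
  have heq : z = (Int.gcd z.re z.im : GaussianInt) * ⟨x, y⟩ := by
    ext
    · simpa using hx
    · simpa using hy
  refine ⟨⟨x, y⟩, ?_, heq⟩
  have hgcd : 0 < Int.gcd z.re z.im := by
    rw [Int.gcd_pos_iff]
    by_contra! h
    exact hz (Zsqrtd.ext h.1 h.2)
  have h := gcd_natCast_mul (Int.gcd z.re z.im) ⟨x, y⟩
  rw [← heq] at h
  exact (Nat.mul_eq_left hgcd.ne').1 h.symm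

theorem r2_eq_sum_card_visibleFiber (hn : n ≠ 0) :
    r2 n = ∑ p ∈ n.divisorsAntidiagonal with IsSquare p.1, #(visibleFiber p.2) := by
  rw [r2_eq_card_normFiber, ← card_sigma]
  symm
  refine card_nbij (fun x ↦ (Nat.sqrt x.1.1 : GaussianInt) * x.2) ?_ ?_ ?_
  · rintro ⟨⟨_, e⟩, u⟩ hx
    obtain ⟨⟨⟨hp, -⟩, k, rfl⟩, hu, -⟩ := by
      simpa [mem_visibleFiber] using hx
    simp [mem_normFiber, Zsqrtd.norm_mul, Zsqrtd.norm_natCast, hu, ← hp]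
  · rintro ⟨⟨_, e⟩, u⟩ hx ⟨⟨_, e'⟩, u'⟩ hx' heq
    obtain ⟨⟨⟨hp, -⟩, k, rfl⟩, hu, hgu⟩ := by
      simpa [mem_visibleFiber] using hx
    obtain ⟨⟨-, k', rfl⟩, hu', hgu'⟩ := by
      simpa [mem_visibleFiber] using hx'
    simp only [Nat.sqrt_eq] at heq
    obtain rfl : k = k' := by
      have h := gcd_natCast_mul k u
      rwa [heq, gcd_natCast_mul, hgu, hgu', mul_one, mul_one, eq_comm] at h
    have hk : (k : GaussianInt) ≠ 0 := by
      rintro h0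
      exact hn (by simp [← hp, Nat.cast_eq_zero.1 h0])
    obtain rfl := mul_left_cancel₀ hk heq
    obtain rfl : e = e' := by exact_mod_cast hu.symm.trans hu'
    rfl
  · intro z hz
    have hz' : z.norm = n := mem_normFiber.1 hz
    obtain ⟨u, hu, heq⟩ := exists_eq_gcd_mul (ne_zero_of_gaussianInt_norm_eq hn hz')
    refine ⟨⟨(Int.gcd z.re z.im * Int.gcd z.re z.im, u.norm.natAbs), u⟩, ?_, ?_⟩
    · have hnorm : Int.gcd z.re z.im * Int.gcd z.re z.im * u.norm.natAbs = n := by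
        rw [heq, Zsqrtd.norm_mul, Zsqrtd.norm_natCast] at hz'
        zify
        rw [abs_of_nonneg (GaussianInt.norm_nonneg u), hz']
      simp [mem_visibleFiber, hnorm, hn, hu, abs_of_nonneg, GaussianInt.norm_nonneg]
    · simp [← heq]

theorem exists_eq_one_add_I_mul (h : Even z.norm) : ∃ t : GaussianInt, z = ⟨1, 1⟩ * t := by
  have hsum : Even (z.re + z.im) := by
    rw [gaussianInt_norm_eq_sq_add_sq] at h
    simpa [Int.even_add, Int.even_pow] using h
  obtain ⟨k, hk⟩ := hsum
  refine ⟨⟨k, z.im - k⟩, Zsqrtd.ext ?_ ?_⟩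
  · simp only [Zsqrtd.re_mul]
    linarith
  · simp

theorem odd_norm_of_isCoprime_star (h : IsCoprime u (star u)) : Odd u.norm := by
  by_contra heven
  obtain ⟨t, ht⟩ := exists_eq_one_add_I_mul (Int.not_odd_iff_even.1 heven)
  have hunit : IsUnit (⟨1, 1⟩ : GaussianInt) := by
    refine h.isUnit_of_dvd' ⟨t, ht⟩ ⟨⟨0, -1⟩ * star t, ?_⟩
    rw [ht, star_mul, mul_comm (star t), ← mul_assoc]
    rfl
  exact absurd ((Zsqrtd.norm_eq_one_iff' (by norm_num) _).2 hunit) (by decide)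

theorem gaussianInt_norm_one_add_I : (⟨1, 1⟩ : GaussianInt).norm = 2 := rfl

theorem one_add_I_mul_ne_of_isCoprime_star {t : GaussianInt} (hu : IsCoprime u (star u)) :
    ⟨1, 1⟩ * t ≠ u := by
  rintro rfl
  have hodd := odd_norm_of_isCoprime_star hu
  rw [Zsqrtd.norm_mul, gaussianInt_norm_one_add_I] at hodd
  exact Int.not_even_iff_odd.2 hodd (even_two_mul _)

/- For `u = a + bi` and `a x + b y = 1`, both `2 = (x - yi) u + (x + yi) ū` and the odd number
`u ū` lie in the ideal `(u, ū)`. -/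
theorem isCoprime_star_iff :
    IsCoprime u (star u) ↔ Int.gcd u.re u.im = 1 ∧ Odd u.norm := by
  rw [← Int.isCoprime_iff_gcd_eq_one]
  refine ⟨fun h ↦ ⟨?_, odd_norm_of_isCoprime_star h⟩, fun ⟨⟨x, y, hxy⟩, k, hk⟩ ↦ ?_⟩
  · obtain ⟨a, b, hab⟩ := h
    have hre := congr_arg Zsqrtd.re hab
    simp only [Zsqrtd.re_add, Zsqrtd.re_mul, Zsqrtd.re_star, Zsqrtd.im_star, Zsqrtd.re_one] at hre
    exact ⟨a.re + b.re, b.im - a.im, by linarith⟩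
  · have htwo : (2 : GaussianInt) = ⟨x, -y⟩ * u + ⟨x, y⟩ * star u := by
      ext
      · simp only [Zsqrtd.re_ofNat, Zsqrtd.re_add, Zsqrtd.re_mul, Zsqrtd.re_star, Zsqrtd.im_star,
          Nat.cast_ofNat]
        linarith
      · simp only [Zsqrtd.im_ofNat, Zsqrtd.im_add, Zsqrtd.im_mul, Zsqrtd.re_star, Zsqrtd.im_star]
        ring
    have hone : (1 : GaussianInt) = u * star u - 2 * k := by
      rw [← Zsqrtd.norm_eq_mul_conj, hk]
      push_cast
      ring
    exact ⟨star u - k * ⟨x, -y⟩, -k * ⟨x, y⟩, by linear_combination -hone + k * htwo⟩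

theorem isCoprime_sub_add_iff (a b : ℤ) :
    IsCoprime (a - b) (a + b) ↔ IsCoprime a b ∧ Odd (a ^ 2 + b ^ 2) := by
  constructor
  · intro h
    refine ⟨?_, ?_⟩
    · obtain ⟨x, y, hxy⟩ := h
      exact ⟨x + y, y - x, by linarith⟩
    · by_contra heven
      have hadd : Even (a + b) := by
        simpa [Int.even_add, Int.even_pow] using Int.not_odd_iff_even.1 heven
      have hsub : Even (a - b) := by simpa [Int.even_add, Int.even_sub] using hadd
      exact absurd (h.isUnit_of_dvd' hsub.two_dvd hadd.two_dvd) (by decide)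
  · rintro ⟨⟨x, y, hxy⟩, k, hk⟩
    refine ⟨a - b + (a * b - k) * (x - y), (a * b - k) * (x + y), ?_⟩
    linear_combination 2 * (a * b - k) * hxy + hk

theorem gcd_one_add_I_mul_eq_one_iff (t : GaussianInt) :
    Int.gcd (⟨1, 1⟩ * t : GaussianInt).re (⟨1, 1⟩ * t : GaussianInt).im = 1 ↔
      IsCoprime t (star t) := by
  rw [isCoprime_star_iff, ← Int.isCoprime_iff_gcd_eq_one, ← Int.isCoprime_iff_gcd_eq_one,
    gaussianInt_norm_eq_sq_add_sq, ← isCoprime_sub_add_iff]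
  simp [sub_eq_add_neg, add_comm]

theorem isCoprime_star_or_exists_eq_one_add_I_mul (hz : Int.gcd z.re z.im = 1) :
    IsCoprime z (star z) ∨ ∃ t : GaussianInt, IsCoprime t (star t) ∧ z = ⟨1, 1⟩ * t := by
  obtain heven | hodd := Int.even_or_odd z.norm
  · obtain ⟨t, rfl⟩ := exists_eq_one_add_I_mul heven
    exact .inr ⟨t, (gcd_one_add_I_mul_eq_one_iff t).1 hz, rfl⟩
  · exact .inl (isCoprime_star_iff.2 ⟨hz, hodd⟩)

theorem card_visibleFiber_eq_sum (hn : n ≠ 0) :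
    #(visibleFiber n)
      = ∑ p ∈ n.divisorsAntidiagonal with p.1 = 1 ∨ p.1 = 2, #(primitiveFiber p.2) := by
  rw [← card_sigma]
  symm
  refine card_nbij (fun x ↦ if x.1.1 = 1 then x.2 else ⟨1, 1⟩ * x.2) ?_ ?_ ?_
  · rintro ⟨⟨d, e⟩, u⟩ hx
    obtain ⟨⟨⟨hp, -⟩, rfl | rfl⟩, hu, hcu⟩ := by
      simpa [mem_primitiveFiber] using hx
    · simpa [mem_visibleFiber, hu, ← hp] using (isCoprime_star_iff.1 hcu).1
    · simpa [mem_visibleFiber, gaussianInt_norm_one_add_I, hu, ← hp] using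
        (gcd_one_add_I_mul_eq_one_iff u).2 hcu
  · rintro ⟨⟨d, e⟩, u⟩ hx ⟨⟨d', e'⟩, u'⟩ hx' heq
    obtain ⟨⟨-, hd⟩, hu, hcu⟩ := by simpa [mem_primitiveFiber] using hx
    obtain ⟨⟨-, hd'⟩, hu', hcu'⟩ := by simpa [mem_primitiveFiber] using hx'
    suffices h : d = d' ∧ u = u' by
      obtain ⟨rfl, rfl⟩ := h
      obtain rfl : e = e' := by exact_mod_cast hu.symm.trans hu'
      rfl
    obtain rfl | rfl := hd <;> obtain rfl | rfl := hd'
    · exact ⟨rfl, heq⟩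
    · exact absurd heq.symm (one_add_I_mul_ne_of_isCoprime_star hcu)
    · exact absurd heq (one_add_I_mul_ne_of_isCoprime_star hcu')
    · exact ⟨rfl, mul_left_cancel₀ (by decide) heq⟩
  · intro z hz
    obtain ⟨hz', hgz⟩ := mem_visibleFiber.1 hz
    obtain hz | ⟨t, ht, rfl⟩ := isCoprime_star_or_exists_eq_one_add_I_mul hgz
    · refine ⟨⟨(1, n), z⟩, ?_, rfl⟩
      simp [mem_primitiveFiber, hn, hz', hz]
    · have hnorm : 2 * t.norm.natAbs = n := by
        rw [Zsqrtd.norm_mul, gaussianInt_norm_one_add_I] at hz'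
        omega
      refine ⟨⟨(2, t.norm.natAbs), t⟩, ?_, rfl⟩
      simp [mem_primitiveFiber, hnorm, hn, ht]

end VisiblePoints

section GaussCircle

open Finset

/-- The Gaussian integer obtained by rounding both coordinates. Its fibres are half-open unit
squares, which compare the number of lattice points in a disc with an area. -/
def roundGaussian (x : ℂ) : GaussianInt := ⟨round x.re, round x.im⟩

theorem norm_sub_roundGaussian_le (x : ℂ) : ‖x - roundGaussian x‖ ≤ 1 := by
  refine (Complex.norm_le_abs_re_add_abs_im _).trans ?_
  have hre := abs_sub_round x.re
  have him := abs_sub_round x.im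
  simp only [roundGaussian, Complex.sub_re, Complex.sub_im, GaussianInt.re_toComplex,
    GaussianInt.im_toComplex]
  linarith

theorem preimage_roundGaussian_singleton (z : GaussianInt) :
    roundGaussian ⁻¹' {z} = Complex.measurableEquivRealProd ⁻¹'
      (Set.Ico ((z.re : ℝ) - 1 / 2) (z.re + 1 / 2) ×ˢ
        Set.Ico ((z.im : ℝ) - 1 / 2) (z.im + 1 / 2)) := by
  have hround (t : ℝ) (a : ℤ) : round t = a ↔ (a : ℝ) - 1 / 2 ≤ t ∧ t < a + 1 / 2 := by
    rw [round_eq, Int.floor_eq_iff]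
    constructor <;> rintro ⟨h1, h2⟩ <;> constructor <;> linarith
  ext x
  simp [roundGaussian, Zsqrtd.ext_iff, hround, Complex.measurableEquivRealProd_apply]

theorem volume_preimage_roundGaussian (s : Finset GaussianInt) :
    volume (roundGaussian ⁻¹' s) = #s := by
  have hmeas (z : GaussianInt) : MeasurableSet (roundGaussian ⁻¹' {z}) := by
    rw [preimage_roundGaussian_singleton]
    exact Complex.measurableEquivRealProd.measurable (measurableSet_Ico.prod measurableSet_Ico)
  have hvol (z : GaussianInt) : volume (roundGaussian ⁻¹' {z}) = 1 := by
    rw [preimage_roundGaussian_singleton,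
      Complex.volume_preserving_equiv_real_prod.measure_preimage_equiv,
      Measure.volume_eq_prod, Measure.prod_prod, volume_Ico, volume_Ico]
    norm_num
  rw [← sum_measure_preimage_singleton s fun z _ ↦ hmeas z]
  simp [hvol]

theorem abs_card_sub_pi_mul_sq_le {s : Finset GaussianInt} {R : ℝ} (hR : 1 ≤ R)
    (hs : ∀ z : GaussianInt, z ∈ s ↔ ‖(z : ℂ)‖ ≤ R) : |#s - π * R ^ 2| ≤ π * (2 * R + 1) := by
  have hdisc {r : ℝ} (hr : 0 ≤ r) : volume.real (Metric.closedBall (0 : ℂ) r) = π * r ^ 2 := by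
    simp [measureReal_def, hr, mul_comm]
  have hcells : volume.real (roundGaussian ⁻¹' s) = #s := by
    simp [measureReal_def, volume_preimage_roundGaussian]
  have hupper : (#s : ℝ) ≤ π * (R + 1) ^ 2 := by
    rw [← hdisc (by linarith), ← hcells]
    refine measureReal_mono (fun x hx ↦ ?_) measure_closedBall_lt_top.ne
    rw [mem_closedBall_zero_iff]
    have := norm_le_norm_add_norm_sub' x (roundGaussian x)
    linarith [norm_sub_roundGaussian_le x, (hs _).1 hx]
  have hlower : π * (R - 1) ^ 2 ≤ (#s : ℝ) := by
    rw [← hdisc (by linarith), ← hcells]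
    refine measureReal_mono (fun x hx ↦ (hs _).2 ?_) (by simp [volume_preimage_roundGaussian])
    rw [mem_closedBall_zero_iff] at hx
    have := norm_le_norm_add_norm_sub x (roundGaussian x)
    linarith [norm_sub_roundGaussian_le x]
  rw [abs_le]
  constructor <;> nlinarith [pi_pos]

theorem gaussianInt_norm_le_iff (z : GaussianInt) (N : ℕ) : z.norm ≤ N ↔ ‖(z : ℂ)‖ ≤ √N := by
  rw [le_sqrt (norm_nonneg _) N.cast_nonneg, ← Complex.normSq_eq_norm_sq,
    ← GaussianInt.intCast_real_norm]
  norm_cast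

theorem abs_sum_r2_sub_le (N : ℕ) :
    |∑ n ∈ Ioc 0 N, (r2 n : ℝ) - π * N| ≤ (3 * π + 1) * √N := by
  obtain rfl | hN := N.eq_zero_or_pos
  · simp
  have hsqrt : 1 ≤ √(N : ℝ) := one_le_sqrt.2 (by exact_mod_cast hN)
  have hcard : ∑ n ∈ Ioc 0 N, r2 n + 1 = #((Icc 0 N).biUnion normFiber) := by
    rw [card_biUnion, ← Ioc_insert_left N.zero_le, sum_insert left_notMem_Ioc, add_comm]
    · have h0 : normFiber 0 = {0} := by
        ext z
        simp [mem_normFiber, GaussianInt.norm_eq_zero]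
      simp [h0, r2_eq_card_normFiber]
    · intro m _ n _ hmn
      exact disjoint_left.2 fun z hm hn ↦ hmn <| by
        exact_mod_cast (mem_normFiber.1 hm).symm.trans (mem_normFiber.1 hn)
  have hdisc := abs_card_sub_pi_mul_sq_le (s := (Icc 0 N).biUnion normFiber) hsqrt fun z ↦ by
    rw [← gaussianInt_norm_le_iff]
    simp only [mem_biUnion, mem_Icc, mem_normFiber]
    exact ⟨fun ⟨n, hn, hz⟩ ↦ by omega,
      fun hz ↦ ⟨z.norm.natAbs, by have := z.norm_nonneg; omega⟩⟩
  rw [← hcard, sq_sqrt (by positivity)] at hdisc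
  push_cast at hdisc
  rw [abs_le] at hdisc ⊢
  constructor <;> nlinarith [pi_pos]

end GaussCircle

section SecondMoment

open Finset
open scoped LSeries.notation

theorem convolution_indicator (A : Set ℕ) [DecidablePred (· ∈ A)] (g : ℕ → ℝ) (n : ℕ) :
    (A.indicator 1 ⍟ g) n = ∑ p ∈ n.divisorsAntidiagonal with p.1 ∈ A, g p.2 := by
  simp [LSeries.convolution_def, sum_filter, Set.indicator_apply]

theorem hasLogMean_r2 : HasLogMean (fun n ↦ r2 n) π :=
  .of_abs_sum_sub_le_sqrt abs_sum_r2_sub_le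

theorem hasSum_indicator_isSquare_mul_iff {h : ℕ → ℝ} {S : ℝ} :
    HasSum (fun m ↦ {d | IsSquare d}.indicator 1 m * h m) S ↔ HasSum (fun k ↦ h (k ^ 2)) S := by
  rw [← (Nat.pow_left_injective two_ne_zero).hasSum_iff]
  · simp [Function.comp_def, Set.indicator_apply, IsSquare.sq]
  · intro m hm
    rw [Set.indicator_of_notMem, zero_mul]
    rintro ⟨k, rfl⟩
    exact hm ⟨k, sq k⟩

theorem hasSum_indicator_isSquare_div :
    HasSum (fun m : ℕ ↦ {d | IsSquare d}.indicator (1 : ℕ → ℝ) m / m) (π ^ 2 / 6) := by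
  simp only [div_eq_mul_inv _ (Nat.cast _), hasSum_indicator_isSquare_mul_iff]
  simpa using hasSum_zeta_two

theorem summable_log_sq_div_sq : Summable fun k : ℕ ↦ log (k ^ 2) / (k : ℝ) ^ 2 := by
  refine .of_nonneg_of_le (fun k ↦ ?_) (fun k ↦ ?_)
    ((summable_nat_rpow_inv.2 (by norm_num : (1 : ℝ) < 3 / 2)).mul_left 4)
  · rw [log_pow]
    have := log_natCast_nonneg k
    positivity
  · obtain rfl | hk := k.eq_zero_or_pos
    · simp
    have hlog := log_natCast_le_rpow_div k (ε := 1 / 2) (by norm_num)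
    have hpow : (k : ℝ) ^ (1 / 2 : ℝ) / (k : ℝ) ^ 2 = ((k : ℝ) ^ (3 / 2 : ℝ))⁻¹ := by
      rw [← rpow_natCast, ← rpow_sub (by positivity), ← rpow_neg (by positivity)]
      norm_num
    rw [← hpow, mul_div_assoc', log_pow]
    refine div_le_div_of_nonneg_right ?_ (by positivity)
    push_cast
    linarith

theorem summable_indicator_isSquare_div_mul_log :
    Summable fun m : ℕ ↦ {d | IsSquare d}.indicator (1 : ℕ → ℝ) m / m * log m := by
  obtain ⟨S, hS⟩ := summable_log_sq_div_sq
  refine ⟨S, ?_⟩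
  simp only [div_mul_eq_mul_div, mul_div_assoc, hasSum_indicator_isSquare_mul_iff]
  simpa using hS

theorem hasLogMean_card_visibleFiber : HasLogMean (fun n ↦ #(visibleFiber n)) (6 / π) := by
  have h := HasLogMean.of_convolution (f := {d : ℕ | IsSquare d}.indicator 1)
    (g := fun n ↦ (#(visibleFiber n) : ℝ)) (c := π) (S := π ^ 2 / 6)
    (Set.indicator_nonneg fun _ _ ↦ zero_le_one) (by simp)
    hasSum_indicator_isSquare_div (by nlinarith [pi_pos, pi_lt_d2])
    summable_indicator_isSquare_div_mul_log
    (hasLogMean_r2.congr fun n hn ↦ ?_)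
  · convert h using 1
    field_simp
  · rw [convolution_indicator]
    exact_mod_cast r2_eq_sum_card_visibleFiber hn

theorem hasLogMean_card_primitiveFiber : HasLogMean (fun n ↦ #(primitiveFiber n)) (4 / π) := by
  have h := HasLogMean.of_convolution (f := {d : ℕ | d = 1 ∨ d = 2}.indicator 1)
    (g := fun n ↦ (#(primitiveFiber n) : ℝ)) (c := 6 / π) (S := 3 / 2)
    (Set.indicator_nonneg fun _ _ ↦ zero_le_one) (by simp)
    ?_ (by norm_num) ?_ (hasLogMean_card_visibleFiber.congr fun n hn ↦ ?_)
  · convert h using 1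
    field_simp
    norm_num
  · convert hasSum_sum_of_ne_finset_zero (s := ({1, 2} : Finset ℕ)) fun m hm ↦ ?_ using 1
    · norm_num [Set.indicator_apply]
    · simp_all
    · infer_instance
  · refine summable_of_ne_finset_zero (s := {1, 2}) fun m hm ↦ ?_
    simp_all
  · rw [convolution_indicator]
    exact_mod_cast card_visibleFiber_eq_sum hn

theorem r2_sq_eq_convolution {n : ℕ} (hn : n ≠ 0) :
    (r2 n : ℝ) ^ 2 = ((fun n ↦ (#(primitiveFiber n) : ℝ)) ⍟ fun n ↦ (r2 n : ℝ)) n := by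
  simp only [LSeries.convolution_def]
  exact_mod_cast r2_sq_eq_sum_divisorsAntidiagonal hn

theorem exists_abs_sum_r2_sq_div_sub_le :
    ∃ B, ∀ N : ℕ, |∑ n ∈ Ioc 0 N, (r2 n : ℝ) ^ 2 / n - 2 * log N ^ 2| ≤ B * (log N + 1) := by
  obtain ⟨B, hB⟩ := HasLogMean.exists_abs_sum_convolution_div_sub_le
    (fun n ↦ (#(primitiveFiber n)).cast_nonneg) hasLogMean_card_primitiveFiber hasLogMean_r2
  refine ⟨B, fun N ↦ ?_⟩
  rw [sum_congr rfl fun n hn ↦ by rw [r2_sq_eq_convolution (mem_Ioc.1 hn).1.ne']]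
  convert hB N using 4
  field_simp
  norm_num

theorem sum_r2_le (N : ℕ) : ∑ n ∈ Ioc 0 N, (r2 n : ℝ) ≤ (4 * π + 1) * N := by
  have hsqrt : √(N : ℝ) ≤ N := by
    rw [sqrt_le_left N.cast_nonneg]
    exact_mod_cast Nat.le_self_pow two_ne_zero N
  nlinarith [(abs_le.1 (abs_sum_r2_sub_le N)).2, pi_pos]

theorem exists_sum_r2_sq_le :
    ∃ C, ∀ N : ℕ, ∑ n ∈ Ioc 0 N, (r2 n : ℝ) ^ 2 ≤ C * (N * log (2 * N)) := by
  obtain ⟨A, hA0, hA⟩ := hasLogMean_card_primitiveFiber.exists_sum_le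
  refine ⟨(4 * π + 1) * (2 * A), fun N ↦ ?_⟩
  obtain rfl | hN := N.eq_zero_or_pos
  · simp
  have hlog : log N + 1 ≤ 2 * log (2 * N) := by
    rw [log_mul two_ne_zero (by positivity)]
    linarith [log_two_gt_d9, log_natCast_nonneg N]
  calc ∑ n ∈ Ioc 0 N, (r2 n : ℝ) ^ 2
      = ∑ m ∈ Ioc 0 N, #(primitiveFiber m) * ∑ k ∈ Ioc 0 (N / m), (r2 k : ℝ) := by
        rw [← sum_convolution]
        exact sum_congr rfl fun n hn ↦ r2_sq_eq_convolution (mem_Ioc.1 hn).1.ne'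
    _ ≤ ∑ m ∈ Ioc 0 N, #(primitiveFiber m) * ((4 * π + 1) * (N / m)) := by
        gcongr with m
        exact (sum_r2_le _).trans (by gcongr; exact Nat.cast_div_le)
    _ = (4 * π + 1) * N * ∑ m ∈ Ioc 0 N, #(primitiveFiber m) / (m : ℝ) := by
        rw [mul_sum]
        exact sum_congr rfl fun m _ ↦ by ring
    _ ≤ (4 * π + 1) * N * (A * (2 * log (2 * N))) := by
        gcongr
        exact (hA N).trans (by gcongr)
    _ = (4 * π + 1) * (2 * A) * (N * log (2 * N)) := by ring

end SecondMoment

/-- The diagonal evaluation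
`∑_{n ≤ Y} (r₂(n)²/n²)·sin²(π√n·w) = 8π²w²(log w)² + O(w²|log w| + Y⁻¹ log 2Y)`. -/
theorem diagonal_evaluation :
    ∃ C > (0 : ℝ), ∃ w₀ : ℝ, 0 < w₀ ∧ w₀ < 1 ∧
      ∀ w : ℝ, 0 < w → w < w₀ → ∀ Y : ℝ, 1 ≤ Y →
        |(∑ n ∈ Finset.Icc 1 ⌊Y⌋₊,
              (r2 n : ℝ) ^ 2 / (n : ℝ) ^ 2 * Real.sin (Real.pi * Real.sqrt n * w) ^ 2)
            - 8 * Real.pi ^ 2 * w ^ 2 * Real.log w ^ 2|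
          ≤ C * (w ^ 2 * |Real.log w| + Y⁻¹ * Real.log (2 * Y)) := by
  obtain ⟨B, hB⟩ := exists_abs_sum_r2_sq_div_sub_le
  obtain ⟨K, hK⟩ := exists_sum_r2_sq_le
  obtain ⟨C, hC, hmain⟩ :=
    exists_abs_sum_mul_sin_sq_sub_le (fun n ↦ sq_nonneg (r2 n : ℝ)) hB hK π
  refine ⟨C, hC, exp (-1), exp_pos _, exp_lt_one_iff.2 (by norm_num), fun w hw hw1 Y hY ↦ ?_⟩
  have hIcc : Finset.Icc 1 ⌊Y⌋₊ = Finset.Ioc 0 ⌊Y⌋₊ := Finset.Icc_add_one_left_eq_Ioc 0 _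
  have hconst : (8 : ℝ) = 4 * 2 := by norm_num
  rw [hIcc, hconst]
  exact hmain w hw hw1 Y hY
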